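/- With b0 = (ρ−μ1)/(ρ+λ0−μ1), b1 = (ρ−μ2)/(ρ+λ0−μ2), and η = λ0/λ1, the strict inequality (1+η−b1)/(1+η−b0) < ((1−δ3) γ2) / ((−δ3)(γ2−1)) holds. -/

import Mathlib

/-!
Both roots solve quadratics `x ^ 2 = m * x + c` with the same `m`, for `c = (ρ + λ0 - μ1) / σ` (the
upper root `γ2`) and `c = (ρ + λ0 + λ1 - μ1) / σ` (the lower root `δ3`). The choice of `m` is such
that `m + c - 1` is `c` with `μ1` replaced by `μ2`, so the left-hand side of the inequality is
`c / (m + c - 1) * ((m + d - 1) / d)` for these two values `c` and `d`.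
For an upper root `x > 1` one has `c / (m + c - 1) < x / (x - 1)`, because after clearing
denominators the difference of the two sides is `x * (x - 1)`. The reflection `x ↦ 1 - x` exchanges
`c` and `m + c - 1` and turns lower roots into upper ones, so the same bound controls both factors.
-/

/-- The larger root of `x ^ 2 = m * x + c`; meaningful when `0 ≤ m ^ 2 + 4 * c`. -/
noncomputable def upperRoot (m c : ℝ) : ℝ := (m + √(m ^ 2 + 4 * c)) / 2

/-- The smaller root of `x ^ 2 = m * x + c`; meaningful when `0 ≤ m ^ 2 + 4 * c`. -/
noncomputable def lowerRoot (m c : ℝ) : ℝ := (m - √(m ^ 2 + 4 * c)) / 2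

section Roots

variable {m c d x : ℝ}

lemma upperRoot_sq (h : 0 ≤ m ^ 2 + 4 * c) : upperRoot m c ^ 2 = m * upperRoot m c + c := by
  unfold upperRoot
  linear_combination (1 / 4) * Real.sq_sqrt h

lemma lt_upperRoot (h : x ^ 2 < m * x + c) : x < upperRoot m c := by
  have hsqrt : 2 * x - m < √(m ^ 2 + 4 * c) := Real.lt_sqrt_of_sq_lt (by linarith)
  unfold upperRoot
  linarith

lemma one_lt_upperRoot (h : 1 < m + c) : 1 < upperRoot m c :=
  lt_upperRoot (by linarith)

lemma div_lt_upperRoot_div_sub_one (h : 1 < m + c) :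
    c / (m + c - 1) < upperRoot m c / (upperRoot m c - 1) := by
  have hx : 1 < upperRoot m c := one_lt_upperRoot h
  have hroot : upperRoot m c ^ 2 = m * upperRoot m c + c :=
    upperRoot_sq (by linarith [sq_nonneg (m - 2)])
  have hgap : 0 < upperRoot m c * (upperRoot m c - 1) := mul_pos (by linarith) (by linarith)
  rw [div_lt_div_iff₀ (by linarith) (by linarith)]
  linarith

lemma one_sub_lowerRoot (m c : ℝ) : 1 - lowerRoot m c = upperRoot (2 - m) (m + c - 1) := by
  have hdiscrim : (2 - m) ^ 2 + 4 * (m + c - 1) = m ^ 2 + 4 * c := by ring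
  rw [lowerRoot, upperRoot, hdiscrim]
  ring

lemma lowerRoot_neg (h : 0 < c) : lowerRoot m c < 0 := by
  have hreflect : 1 < 1 - lowerRoot m c := by
    rw [one_sub_lowerRoot]
    exact one_lt_upperRoot (by linarith)
  linarith

lemma div_lt_one_sub_lowerRoot_div_neg (h : 0 < c) :
    (m + c - 1) / c < (1 - lowerRoot m c) / -lowerRoot m c := by
  have hbound := div_lt_upperRoot_div_sub_one (m := 2 - m) (c := m + c - 1) (by linarith)
  rw [← one_sub_lowerRoot] at hbound
  convert hbound using 2 <;> ring

lemma div_mul_div_lt_upperRoot_mul_lowerRoot (hc : 1 < m + c) (hd : 0 < d) :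
    c / (m + c - 1) * ((m + d - 1) / d) <
      upperRoot m c / (upperRoot m c - 1) * ((1 - lowerRoot m d) / -lowerRoot m d) := by
  have hupper := div_lt_upperRoot_div_sub_one hc
  have hlower := div_lt_one_sub_lowerRoot_div_neg (m := m) hd
  have hx : 1 < upperRoot m c := one_lt_upperRoot hc
  have hy : lowerRoot m d < 0 := lowerRoot_neg hd
  have hupper_pos : 0 < upperRoot m c / (upperRoot m c - 1) :=
    div_pos (by linarith) (by linarith)
  have hlower_pos : 0 < (1 - lowerRoot m d) / -lowerRoot m d :=
    div_pos (by linarith) (by linarith)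
  rcases le_or_gt 0 c with hc_nonneg | hc_neg
  · have hfactor : 0 ≤ c / (m + c - 1) := div_nonneg hc_nonneg (by linarith)
    exact mul_lt_mul_of_lt_of_le_of_nonneg_of_pos hupper hlower.le hfactor hlower_pos
  · have hfactor : 0 ≤ (m + d - 1) / d := div_nonneg (by linarith) hd.le
    exact mul_lt_mul_of_le_of_lt_of_nonneg_of_pos hupper.le hlower hfactor hupper_pos

end Roots

section Field

variable {K : Type*} [Field K] {p q a b : K}

lemma one_add_div_sub_div_eq (hq : q ≠ 0) (ha : a ≠ 0) :
    1 + p / q - (a - p) / a = p / q * ((a + q) / a) := by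
  field_simp
  ring

lemma one_add_div_sub_div_div_eq (hp : p ≠ 0) (hq : q ≠ 0) (ha : a ≠ 0) (hb : b ≠ 0) :
    (1 + p / q - (b - p) / b) / (1 + p / q - (a - p) / a) = a / b * ((b + q) / (a + q)) := by
  rw [one_add_div_sub_div_eq hq hb, one_add_div_sub_div_eq hq ha,
    mul_div_mul_left _ _ (div_ne_zero hp hq), div_div_div_eq, div_mul_div_comm, mul_comm a]

end Field

theorem stmt_8_general (μ1 μ2 ρ σ lam0 lam1 b0 b1 η m δ3 γ2 : ℝ)
    (hσ : 0 < σ) (hlam0 : lam0 ≠ 0) (hlam1 : lam1 ≠ 0) (hμ1_ne : μ1 ≠ ρ + lam0)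
    (hμ1 : μ1 < ρ + lam0 + lam1) (hμ2 : μ2 < ρ + lam0)
    (hm : m = 1 + (μ1 - μ2) / σ)
    (hb0 : b0 = (ρ - μ1) / (ρ + lam0 - μ1)) (hb1 : b1 = (ρ - μ2) / (ρ + lam0 - μ2))
    (hη : η = lam0 / lam1)
    (hδ3 : δ3 = (m - √(m ^ 2 + 4 * (ρ + lam0 + lam1 - μ1) / σ)) / 2)
    (hγ2 : γ2 = (m + √(m ^ 2 + 4 * (ρ + lam0 - μ1) / σ)) / 2) :
    (1 + η - b1) / (1 + η - b0) < (1 - δ3) * γ2 / ((-δ3) * (γ2 - 1)) := by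
  set c := (ρ + lam0 - μ1) / σ with hc
  set d := (ρ + lam0 + lam1 - μ1) / σ with hd
  have hγ2_root : γ2 = upperRoot m c := by rw [hγ2, upperRoot, mul_div_assoc]
  have hδ3_root : δ3 = lowerRoot m d := by rw [hδ3, lowerRoot, mul_div_assoc]
  have hc_shift : m + c - 1 = (ρ + lam0 - μ2) / σ := by rw [hm, hc]; ring
  have hd_shift : m + d - 1 = (ρ + lam0 + lam1 - μ2) / σ := by rw [hm, hd]; ring
  have hc_shift_pos : 0 < m + c - 1 := hc_shift ▸ div_pos (sub_pos.2 hμ2) hσ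
  have hd_pos : 0 < d := div_pos (sub_pos.2 hμ1) hσ
  have hratio : (1 + η - b1) / (1 + η - b0) = c / (m + c - 1) * ((m + d - 1) / d) := by
    rw [hη, hb0, hb1, hc_shift, hd_shift, hc, hd, div_div_div_cancel_right₀ hσ.ne',
      div_div_div_cancel_right₀ hσ.ne']
    convert one_add_div_sub_div_div_eq hlam0 hlam1 (sub_ne_zero.2 hμ1_ne.symm)
      (sub_pos.2 hμ2).ne' using 4 <;> ring
  rw [hratio, mul_comm (1 - δ3), mul_comm (-δ3), ← div_mul_div_comm, hγ2_root, hδ3_root]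
  exact div_mul_div_lt_upperRoot_mul_lowerRoot (by linarith) hd_pos

theorem stmt_8 (μ1 μ2 ρ σ lam0 lam1 b0 b1 η m δ3 γ2 : ℝ)
    (hσ : 0 < σ) (hlam0 : 0 < lam0) (hlam1 : 0 < lam1)
    (hμ1 : μ1 < ρ) (hμ2 : μ2 < ρ)
    (hm : m = 1 + (μ1 - μ2) / σ)
    (hb0 : b0 = (ρ - μ1) / (ρ + lam0 - μ1)) (hb1 : b1 = (ρ - μ2) / (ρ + lam0 - μ2))
    (hη : η = lam0 / lam1)
    (hδ3 : δ3 = (m - Real.sqrt (m ^ 2 + 4 * (ρ + lam0 + lam1 - μ1) / σ)) / 2)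
    (hγ2 : γ2 = (m + Real.sqrt (m ^ 2 + 4 * (ρ + lam0 - μ1) / σ)) / 2) :
    (1 + η - b1) / (1 + η - b0) < (1 - δ3) * γ2 / ((-δ3) * (γ2 - 1)) :=
  stmt_8_general μ1 μ2 ρ σ lam0 lam1 b0 b1 η m δ3 γ2 hσ hlam0.ne' hlam1.ne'
    (by linarith : μ1 < ρ + lam0).ne (by linarith) (by linarith) hm hb0 hb1 hη hδ3 hγ2
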